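/- Let (A_i)_{i∈ℤ} be a family of finitely generated free abelian groups, nonzero for only finitely many i, equipped with a differential ∂ : A_i → A_{i−1} satisfying ∂∘∂ = 0, and suppose every homology group H_i(A) = ker(∂: A_i→A_{i−1})/im(∂: A_{i+1}→A_i) is a free abelian group. Then there is an isomorphism of graded abelian groups det(A) ≅ det(H_*(A)); in particular the Euler characteristics agree: Σ_i (−1)^i rank(A_i) = Σ_i (−1)^i rank(H_i(A)). -/

import Mathlib

/-! # Statement 5: the determinant of a complex is the determinant of its homology -/

noncomputable section
open scoped TensorProduct

/-- Transport along an equality of degrees. -/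
def ccast (A : ℤ → Type) [∀ i, AddCommGroup (A i)] {i j : ℤ} (h : i = j) :
    A i →ₗ[ℤ] A j where
  toFun a := h ▸ a
  map_add' a b := by subst h; rfl
  map_smul' r a := by subst h; rfl

/-- Cycles: the kernel of the differential leaving degree `i`. -/
abbrev cycles (A : ℤ → Type) [∀ i, AddCommGroup (A i)]
    (d : ∀ i, A i →ₗ[ℤ] A (i - 1)) (i : ℤ) : Submodule ℤ (A i) :=
  LinearMap.ker (d i)

/-- Boundaries: the image of the differential entering degree `i`. -/
abbrev boundaries (A : ℤ → Type) [∀ i, AddCommGroup (A i)]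
    (d : ∀ i, A i →ₗ[ℤ] A (i - 1)) (i : ℤ) : Submodule ℤ (A i) :=
  Submodule.map (ccast A (show i + 1 - 1 = i by ring)) (LinearMap.range (d (i + 1)))

/-- The degree-`i` homology of the complex `(A, d)`. -/
abbrev homology (A : ℤ → Type) [∀ i, AddCommGroup (A i)]
    (d : ∀ i, A i →ₗ[ℤ] A (i - 1)) (i : ℤ) : Type :=
  ↥(cycles A d i) ⧸
    (Submodule.comap (cycles A d i).subtype (boundaries A d i))

/-- The top exterior power `det(M) = Λ^{rank M} M` (as an ungraded group). -/
abbrev detTop (M : Type) [AddCommGroup M] : Type :=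
  ⋀[ℤ]^(Module.finrank ℤ M) M

/-- `det(M)^{(−1)^i}`: the top exterior power for `i` even, and its `ℤ`-linear dual
(its inverse line) for `i` odd. -/
def detSigned (M : Type) [AddCommGroup M] (i : ℤ) : Type :=
  if Even i then detTop M else Module.Dual ℤ (detTop M)

noncomputable instance (M : Type) [AddCommGroup M] (i : ℤ) :
    AddCommGroup (detSigned M i) := by
  unfold detSigned; split <;> infer_instance

/-- The underlying line of the graded determinant `det(A) = ⊗ᵢ det(Aᵢ)^{(−1)^i}`
of a graded abelian group supported in degrees `|i| ≤ N`. -/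
abbrev detLine (A : ℤ → Type) [∀ i, AddCommGroup (A i)] (N : ℕ) : Type :=
  ⨂[ℤ] (i : (Finset.Icc (-(N : ℤ)) (N : ℤ))), detSigned (A i.val) i.val

/-!
A free abelian group of rank one is isomorphic to `ℤ`, and this is preserved by duals and finite
tensor products. Hence the lines `det(A)` and `det(H_*(A))` are both isomorphic to `ℤ`, and only
their degrees have to be compared. If `ρᵢ` is the rank of `d : Aᵢ → Aᵢ₋₁`, then
`rank Aᵢ = rank Hᵢ(A) + ρᵢ + ρᵢ₊₁`, and the alternating sum of `ρᵢ + ρᵢ₊₁` telescopes.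
-/

section Determinant

theorem nonempty_detTop_linearEquiv_int (M : Type) [AddCommGroup M] [Module.Free ℤ M]
    [Module.Finite ℤ M] : Nonempty (detTop M ≃ₗ[ℤ] ℤ) :=
  ⟨LinearEquiv.ofFinrankEq _ _ (by simp [exteriorPower.finrank_eq])⟩

theorem nonempty_addEquiv_of_heq.{u} {X Y : Type u} (h : X = Y) [I : AddCommGroup X]
    [J : AddCommGroup Y] (hIJ : I ≍ J) : Nonempty (X ≃+ Y) := by
  subst h
  cases hIJ
  exact ⟨AddEquiv.refl X⟩

-- The group structure on `detSigned M i` is a cast along an equality of types, chosen by the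
-- decision procedure for `Even i`; evaluating the latter leaves a single cast.
theorem nonempty_detSigned_addEquiv_of_even (M : Type) [AddCommGroup M] {i : ℤ} (hi : Even i) :
    Nonempty (detSigned M i ≃+ detTop M) := by
  refine nonempty_addEquiv_of_heq (X := detSigned M i) (if_pos hi) ?_
  have decide_even : Int.instDecidablePredEven i = isTrue hi := Subsingleton.elim _ _
  simp only [instAddCommGroupDetSigned, decide_even]
  exact cast_heq _ _

theorem nonempty_detSigned_addEquiv_of_not_even (M : Type) [AddCommGroup M] {i : ℤ}
    (hi : ¬Even i) : Nonempty (detSigned M i ≃+ Module.Dual ℤ (detTop M)) := by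
  refine nonempty_addEquiv_of_heq (X := detSigned M i) (if_neg hi) ?_
  have decide_even : Int.instDecidablePredEven i = isFalse hi := Subsingleton.elim _ _
  simp only [instAddCommGroupDetSigned, decide_even]
  exact cast_heq _ _

theorem nonempty_detSigned_linearEquiv_int (M : Type) [AddCommGroup M] [Module.Free ℤ M]
    [Module.Finite ℤ M] (i : ℤ) : Nonempty (detSigned M i ≃ₗ[ℤ] ℤ) := by
  obtain ⟨e⟩ := nonempty_detTop_linearEquiv_int M
  by_cases hi : Even i
  · obtain ⟨f⟩ := nonempty_detSigned_addEquiv_of_even M hi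
    exact ⟨(f.trans e.toAddEquiv).toIntLinearEquiv⟩
  · obtain ⟨f⟩ := nonempty_detSigned_addEquiv_of_not_even M hi
    let dualEquiv : Module.Dual ℤ (detTop M) ≃ₗ[ℤ] ℤ :=
      e.symm.dualMap.trans (LinearMap.ringLmapEquivSelf ℤ ℤ ℤ)
    exact ⟨(f.trans dualEquiv.toAddEquiv).toIntLinearEquiv⟩

theorem nonempty_detLine_linearEquiv_int (A : ℤ → Type) [∀ i, AddCommGroup (A i)] (N : ℕ)
    (hfree : ∀ i ∈ Finset.Icc (-(N : ℤ)) N, Module.Free ℤ (A i))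
    (hfin : ∀ i ∈ Finset.Icc (-(N : ℤ)) N, Module.Finite ℤ (A i)) :
    Nonempty (detLine A N ≃ₗ[ℤ] ℤ) := by
  have factor_equiv (i : Finset.Icc (-(N : ℤ)) N) :
      Nonempty (detSigned (A i.val) i.val ≃ₗ[ℤ] ℤ) :=
    have := hfree i i.property
    have := hfin i i.property
    nonempty_detSigned_linearEquiv_int (A i) i
  exact ⟨(PiTensorProduct.congr fun i => (factor_equiv i).some).trans
    (PiTensorProduct.constantBaseRingEquiv _ ℤ).toLinearEquiv⟩

end Determinant

section AlternatingSum

theorem sum_Icc_sub_add_one {G : Type*} [AddCommGroup G] (f : ℤ → G) {m n : ℤ}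
    (hmn : m ≤ n + 1) : ∑ i ∈ Finset.Icc m n, (f i - f (i + 1)) = f m - f (n + 1) := by
  obtain ⟨n, rfl⟩ : ∃ k, n = k - 1 := ⟨n + 1, by ring⟩
  rw [sub_add_cancel] at hmn ⊢
  induction n, hmn using Int.leInduction with
  | base => simp
  | succ n hmn ih =>
    rw [add_sub_cancel_right, ← Finset.insert_Icc_sub_one_right_eq_Icc hmn,
      Finset.sum_insert (by simp), ih]
    abel

theorem neg_one_pow_natAbs_add_one (i : ℤ) :
    (-1 : ℤ) ^ (i + 1).natAbs = -(-1) ^ i.natAbs := by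
  simp only [← Int.coe_negOnePow ℤ, Int.negOnePow_succ, Units.val_neg, Int.cast_neg]

end AlternatingSum

section Complex

variable (A : ℤ → Type) [∀ i, AddCommGroup (A i)] (d : ∀ i, A i →ₗ[ℤ] A (i - 1))

theorem ccast_injective {i j : ℤ} (h : i = j) : Function.Injective (ccast A h) := by
  subst h
  exact Function.injective_id

theorem finrank_boundaries (i : ℤ) :
    Module.finrank ℤ (boundaries A d i) = Module.finrank ℤ (LinearMap.range (d (i + 1))) :=
  (Submodule.equivMapOfInjective _ (ccast_injective A _) _).finrank_eq.symm

theorem boundaries_le_cycles (hd : ∀ (i : ℤ) (x : A i), d (i - 1) (d i x) = 0) (i : ℤ) :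
    boundaries A d i ≤ cycles A d i := by
  have map_ccast_map {j k : ℤ} (h : j - 1 = k) (x : A j) : d k (ccast A h (d j x)) = 0 := by
    subst h
    exact hd j x
  rintro _ ⟨_, ⟨x, rfl⟩, rfl⟩
  exact map_ccast_map _ x

theorem finrank_eq_finrank_homology_add (hd : ∀ (i : ℤ) (x : A i), d (i - 1) (d i x) = 0)
    (i : ℤ) [Module.Finite ℤ (A i)] :
    Module.finrank ℤ (A i) = Module.finrank ℤ (homology A d i) +
      Module.finrank ℤ (LinearMap.range (d i)) +
      Module.finrank ℤ (LinearMap.range (d (i + 1))) := by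
  have range_add_cycles : Module.finrank ℤ (LinearMap.range (d i)) +
      Module.finrank ℤ (cycles A d i) = Module.finrank ℤ (A i) := by
    rw [← (d i).quotKerEquivRange.finrank_eq, Submodule.finrank_quotient_add_finrank]
  have homology_add_boundaries : Module.finrank ℤ (homology A d i) +
      Module.finrank ℤ (boundaries A d i) = Module.finrank ℤ (cycles A d i) := by
    rw [← (Submodule.comapSubtypeEquivOfLe (boundaries_le_cycles A d hd i)).finrank_eq,
      Submodule.finrank_quotient_add_finrank]
  rw [← range_add_cycles, ← homology_add_boundaries, finrank_boundaries]
  ring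

theorem sum_neg_one_pow_mul_finrank_eq_homology
    (hd : ∀ (i : ℤ) (x : A i), d (i - 1) (d i x) = 0) {m n : ℤ} (hmn : m ≤ n + 1)
    (hfin : ∀ i ∈ Finset.Icc m n, Module.Finite ℤ (A i)) (hm : d m = 0) (hn : d (n + 1) = 0) :
    ∑ i ∈ Finset.Icc m n, (-1 : ℤ) ^ i.natAbs * (Module.finrank ℤ (A i) : ℤ) =
      ∑ i ∈ Finset.Icc m n,
        (-1 : ℤ) ^ i.natAbs * (Module.finrank ℤ (homology A d i) : ℤ) := by
  let signedRank (i : ℤ) : ℤ := (-1) ^ i.natAbs * Module.finrank ℤ (LinearMap.range (d i))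
  have signedRank_eq_zero {i : ℤ} (hi : d i = 0) : signedRank i = 0 := by
    simp only [signedRank]
    rw [hi, LinearMap.range_zero, finrank_bot, Nat.cast_zero, mul_zero]
  have sub_eq_signedRank_sub (i : ℤ) (hi : i ∈ Finset.Icc m n) :
      (-1 : ℤ) ^ i.natAbs * (Module.finrank ℤ (A i) : ℤ) -
        (-1 : ℤ) ^ i.natAbs * (Module.finrank ℤ (homology A d i) : ℤ) =
      signedRank i - signedRank (i + 1) := by
    have := hfin i hi
    simp only [signedRank, finrank_eq_finrank_homology_add A d hd i,
      neg_one_pow_natAbs_add_one]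
    push_cast
    ring
  rw [← sub_eq_zero, ← Finset.sum_sub_distrib, Finset.sum_congr rfl sub_eq_signedRank_sub,
    sum_Icc_sub_add_one signedRank hmn, signedRank_eq_zero hm, signedRank_eq_zero hn, sub_zero]

end Complex

theorem det_of_complex_iso_det_of_homology_general
    (A : ℤ → Type) [∀ i, AddCommGroup (A i)]
    (N : ℕ) (hfin : ∀ i ∈ Finset.Icc (-(N : ℤ)) N, Module.Finite ℤ (A i))
    (d : ∀ i, A i →ₗ[ℤ] A (i - 1))
    (hd : ∀ (i : ℤ) (x : A i), d (i - 1) (d i x) = 0)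
    (hbot : d (-(N : ℤ)) = 0) (htop : d ((N : ℤ) + 1) = 0) :
    ((∀ i ∈ Finset.Icc (-(N : ℤ)) N, Module.Free ℤ (A i)) →
      (∀ i ∈ Finset.Icc (-(N : ℤ)) N, Module.Free ℤ (homology A d i)) →
      Nonempty (detLine A N ≃ₗ[ℤ] detLine (fun i => homology A d i) N)) ∧
    (∑ i ∈ Finset.Icc (-(N : ℤ)) (N : ℤ),
        (-1 : ℤ) ^ i.natAbs * (Module.finrank ℤ (A i) : ℤ) =
      ∑ i ∈ Finset.Icc (-(N : ℤ)) (N : ℤ),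
        (-1 : ℤ) ^ i.natAbs * (Module.finrank ℤ (homology A d i) : ℤ)) := by
  refine ⟨fun hfree hH => ?_,
    sum_neg_one_pow_mul_finrank_eq_homology A d hd (by omega) hfin hbot htop⟩
  have hfinH (i : ℤ) (hi : i ∈ Finset.Icc (-(N : ℤ)) N) : Module.Finite ℤ (homology A d i) :=
    have := hfin i hi
    inferInstance
  obtain ⟨e⟩ := nonempty_detLine_linearEquiv_int A N hfree hfin
  obtain ⟨f⟩ := nonempty_detLine_linearEquiv_int (fun i => homology A d i) N hH hfinH
  exact ⟨e.trans f.symm⟩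

/-- Let `(Aᵢ)` be a complex of finitely generated free abelian
groups, nonzero only for `|i| ≤ N`, with differential `d` satisfying `d∘d = 0`, and
suppose every homology group `Hᵢ(A)` is free. Then there is an isomorphism of
graded abelian groups `det(A) ≅ det(H_*(A))`: the two rank-one determinant lines
are isomorphic, and they sit in the same degree, i.e. the Euler characteristics
agree: `Σᵢ (−1)^i rank Aᵢ = Σᵢ (−1)^i rank Hᵢ(A)`. -/
theorem det_of_complex_iso_det_of_homology
    (A : ℤ → Type) [∀ i, AddCommGroup (A i)]
    (hfree : ∀ i, Module.Free ℤ (A i)) (hfin : ∀ i, Module.Finite ℤ (A i))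
    (N : ℕ) (hsupp : ∀ i : ℤ, (N : ℤ) < |i| → Subsingleton (A i))
    (d : ∀ i, A i →ₗ[ℤ] A (i - 1))
    (hd : ∀ (i : ℤ) (x : A i), d (i - 1) (d i x) = 0)
    (hH : ∀ i, Module.Free ℤ (homology A d i)) :
    Nonempty (detLine A N ≃ₗ[ℤ] detLine (fun i => homology A d i) N) ∧
    (∑ i ∈ Finset.Icc (-(N : ℤ)) (N : ℤ),
        (-1 : ℤ) ^ i.natAbs * (Module.finrank ℤ (A i) : ℤ) =
      ∑ i ∈ Finset.Icc (-(N : ℤ)) (N : ℤ),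
        (-1 : ℤ) ^ i.natAbs * (Module.finrank ℤ (homology A d i) : ℤ)) := by
  have hbot : d (-(N : ℤ)) = 0 :=
    have := hsupp (-(N : ℤ) - 1) (by rw [lt_abs]; omega)
    Subsingleton.elim _ _
  have htop : d ((N : ℤ) + 1) = 0 :=
    have := hsupp ((N : ℤ) + 1) (by rw [lt_abs]; omega)
    Subsingleton.elim _ _
  exact (det_of_complex_iso_det_of_homology_general A N (fun i _ => hfin i) d hd hbot htop).imp_left
    fun iso => iso (fun i _ => hfree i) fun i _ => hH i

end
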